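/- Let k ≥ 2 be a fixed integer. For all real D₁, D₂, N₁, N₂ ≥ 1 and all δ > 0, the number A(D₁,D₂,N₁,N₂;δ) of quadruples (d₁,d₂,n₁,n₂) of positive integers with D₁ < d₁ ≤ 2D₁, D₂ < d₂ ≤ 2D₂, N₁ < n₁ ≤ 2N₁, N₂ < n₂ ≤ 2N₂ and |√(n₁/d₁^k) − √(n₂/d₂^k)| ≤ δ satisfies A(D₁,D₂,N₁,N₂;δ) ≪ δ (D₁D₂)^{1+k/4}(N₁N₂)^{3/4} + (D₁D₂N₁N₂)^{1/2} log(2 D₁D₂N₁N₂), where the implied constant depends only on k. -/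

import Mathlib

open Real Filter

noncomputable section

/-!
Let `σ` be the natural size `((N₁ * N₂) / (4 * D₁ * D₂) ^ k) ^ (1 / 4)` of the square roots. If
`12 * δ > σ`, counting all quadruples is enough. Otherwise, the closeness of the square roots says
that `n₁ / n₂` agrees with `(d₁ / d₂) ^ k` up to a relative error `O(δ / σ)`, so that fixing one of
the pairs `(n₁, n₂)`, `(d₁, d₂)` confines the ratio of the other to a relative interval of length
`η = O(δ / σ)`.

Ratios of distinct pairs with the same greatest common divisor `e` and second entries at most `B`
differ by at least `e ^ 2 / B ^ 2`. With `X = 4 * N₁ * N₂` and `Y = 4 * D₁ * D₂`, the solutions in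
which the two pairs have greatest common divisors `e` and `f` therefore number at most
`min (X / e ^ 2) (Y / f ^ 2) + η * (X / e ^ 2) * (Y / f ^ 2)`. Summed over `f`, the minimum gives
`O(√(X * Y) / e)`, and the harmonic sum over `e` then produces the logarithm.
-/

open Finset in
theorem card_le_one_add_div_of_separated {ι : Type*} {T : Finset ι} {g : ι → ℝ} {s L : ℝ}
    (hs : 0 < s) (hL : 0 ≤ L) (hsep : ∀ x ∈ T, ∀ y ∈ T, x ≠ y → s ≤ |g x - g y|)
    (hdiam : ∀ x ∈ T, ∀ y ∈ T, |g x - g y| ≤ L) : (#T : ℝ) ≤ 1 + L / s := by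
  rcases T.eq_empty_or_nonempty with rfl | hT
  · rw [card_empty, Nat.cast_zero]
    positivity
  obtain ⟨m, hm, hmin⟩ := T.exists_min_image g hT
  have hnonneg : ∀ x ∈ T, 0 ≤ (g x - g m) / s := fun x hx ↦
    div_nonneg (sub_nonneg.2 (hmin x hx)) hs.le
  have hmaps : Set.MapsTo (fun x ↦ ⌊(g x - g m) / s⌋₊) T (range (⌊L / s⌋₊ + 1)) := by
    intro x hx
    rw [coe_range, Set.mem_Iio, Nat.lt_succ_iff]
    exact Nat.floor_le_floor (div_le_div_of_nonneg_right
      ((le_abs_self _).trans (hdiam x hx m hm)) hs.le)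
  have hinj : Set.InjOn (fun x ↦ ⌊(g x - g m) / s⌋₊) T := by
    intro x hx y hy hxy
    by_contra hne
    have hlt : |(g x - g m) / s - (g y - g m) / s| < 1 := by
      obtain ⟨hx₁, hx₂⟩ := (Nat.floor_eq_iff (hnonneg x hx)).1 hxy
      obtain ⟨hy₁, hy₂⟩ := (Nat.floor_eq_iff (hnonneg y hy)).1 rfl
      rw [abs_sub_lt_iff]
      constructor <;> linarith
    rw [← sub_div, sub_sub_sub_cancel_right, abs_div, abs_of_pos hs, div_lt_one hs] at hlt
    exact hlt.not_ge (hsep x hx y hy hne)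
  calc (#T : ℝ) ≤ (⌊L / s⌋₊ + 1 : ℕ) := by
        exact_mod_cast (card_le_card_of_injOn _ hmaps hinj).trans_eq (card_range _)
    _ ≤ 1 + L / s := by
        push_cast
        linarith [Nat.floor_le (div_nonneg hL hs.le)]

theorem card_le_mul_of_card_fiber_le {α β : Type*} [DecidableEq β] {S : Finset α} {T : Finset β}
    {g : α → β} {c : ℝ} (hg : Set.MapsTo g S T)
    (hc : ∀ b ∈ T, (({a ∈ S | g a = b} : Finset α).card : ℝ) ≤ c) :
    (S.card : ℝ) ≤ c * T.card := by
  rw [Finset.card_eq_sum_card_fiberwise hg, Nat.cast_sum, mul_comm, ← nsmul_eq_mul]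
  exact Finset.sum_le_card_nsmul _ _ _ hc

section Pairs

open Finset

variable {A B M N L η : ℝ} {e f : ℕ} {p q : ℕ × ℕ}

/-- The box of pairs of positive integers `(a, b)` with `a ≤ A` and `b ≤ B`. -/
def natBox (A B : ℝ) : Finset (ℕ × ℕ) := Icc 1 ⌊A⌋₊ ×ˢ Icc 1 ⌊B⌋₊

/-- The pairs in the box `natBox A B` whose greatest common divisor is exactly `e`. -/
def gcdBox (A B : ℝ) (e : ℕ) : Finset (ℕ × ℕ) := {p ∈ natBox A B | p.1.gcd p.2 = e}

/-- The real quotient `a / b` of a pair `(a, b)` of natural numbers; it is only evaluated at pairs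
of positive integers. -/
def ratio (p : ℕ × ℕ) : ℝ := p.1 / p.2

theorem mem_natBox :
    p ∈ natBox A B ↔ 0 < p.1 ∧ 0 < p.2 ∧ (p.1 : ℝ) ≤ A ∧ (p.2 : ℝ) ≤ B := by
  simp only [natBox, mem_product, mem_Icc, Nat.one_le_iff_ne_zero, Nat.pos_iff_ne_zero]
  constructor
  · rintro ⟨⟨ha, hA⟩, hb, hB⟩
    exact ⟨ha, hb, (Nat.le_floor_iff' ha).1 hA, (Nat.le_floor_iff' hb).1 hB⟩
  · rintro ⟨ha, hb, hA, hB⟩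
    exact ⟨⟨ha, Nat.le_floor hA⟩, hb, Nat.le_floor hB⟩

theorem mem_gcdBox : p ∈ gcdBox A B e ↔ p ∈ natBox A B ∧ p.1.gcd p.2 = e := mem_filter

theorem card_natBox_le (hA : 0 ≤ A) (hB : 0 ≤ B) : (#(natBox A B) : ℝ) ≤ A * B := by
  rw [natBox, card_product, Nat.card_Icc, Nat.card_Icc, Nat.add_sub_cancel, Nat.add_sub_cancel,
    Nat.cast_mul]
  gcongr <;> exact Nat.floor_le ‹_›

theorem gcd_mem_Icc_of_mem_natBox (hp : p ∈ natBox A B) :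
    p.1.gcd p.2 ∈ Icc 1 ⌊√(A * B)⌋₊ := by
  obtain ⟨ha, hb, hA, hB⟩ := mem_natBox.1 hp
  have hgA : (p.1.gcd p.2 : ℝ) ≤ A := le_trans (mod_cast Nat.gcd_le_left _ ha) hA
  have hgB : (p.1.gcd p.2 : ℝ) ≤ B := le_trans (mod_cast Nat.gcd_le_right _ hb) hB
  refine mem_Icc.2 ⟨Nat.gcd_pos_of_pos_left _ ha, Nat.le_floor (Real.le_sqrt_of_sq_le ?_)⟩
  rw [sq]
  gcongr
  exact (Nat.cast_nonneg _).trans hgA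

theorem card_gcdBox_le (hA : 0 ≤ A) (hB : 0 ≤ B) (he : 0 < e) :
    (#(gcdBox A B e) : ℝ) ≤ A * B / (e : ℝ) ^ 2 := by
  have he' : (0 : ℝ) < e := mod_cast he
  have hsub : gcdBox A B e ⊆ (natBox (A / e) (B / e)).image fun p ↦ (e * p.1, e * p.2) := by
    rintro ⟨a, b⟩ hp
    obtain ⟨hbox, hgcd⟩ := mem_gcdBox.1 hp
    obtain ⟨ha, hb, hA, hB⟩ := mem_natBox.1 hbox
    obtain ⟨a', rfl⟩ : e ∣ a := hgcd ▸ Nat.gcd_dvd_left _ _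
    obtain ⟨b', rfl⟩ : e ∣ b := hgcd ▸ Nat.gcd_dvd_right _ _
    refine mem_image.2 ⟨(a', b'), mem_natBox.2 ⟨Nat.pos_of_mul_pos_left ha,
      Nat.pos_of_mul_pos_left hb, ?_, ?_⟩, rfl⟩
    · rw [le_div_iff₀' he']
      exact_mod_cast hA
    · rw [le_div_iff₀' he']
      exact_mod_cast hB
  calc (#(gcdBox A B e) : ℝ) ≤ #(natBox (A / e) (B / e)) :=
        mod_cast (card_le_card hsub).trans card_image_le
    _ ≤ A / e * (B / e) := card_natBox_le (by positivity) (by positivity)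
    _ = A * B / (e : ℝ) ^ 2 := by rw [div_mul_div_comm, sq]

theorem eq_of_mul_eq_mul_of_gcd_eq {a b c d : ℕ} (hb : 0 < b) (hab : a.gcd b = e)
    (hcd : c.gcd d = e) (h : a * d = c * b) : a = c ∧ b = d := by
  have he : 0 < e := hab ▸ Nat.gcd_pos_of_pos_right _ hb
  have hac : a * e = c * e := by
    rw [← hcd, ← Nat.gcd_mul_left, h, mul_comm a c, Nat.gcd_mul_left, hab, hcd]
  have hbd : b * e = d * e := by
    rw [← hcd, ← Nat.gcd_mul_left, mul_comm b c, ← h, mul_comm a d, mul_comm b d,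
      Nat.gcd_mul_left, hab, hcd]
  exact ⟨Nat.eq_of_mul_eq_mul_right he hac, Nat.eq_of_mul_eq_mul_right he hbd⟩

theorem sq_le_abs_mul_sub_mul_of_gcd_eq (hp : 0 < p.2) (hpe : p.1.gcd p.2 = e)
    (hqe : q.1.gcd q.2 = e) (hpq : p ≠ q) :
    (e : ℝ) ^ 2 ≤ |(p.1 : ℝ) * q.2 - q.1 * p.2| := by
  have hne : (p.1 : ℤ) * q.2 - q.1 * p.2 ≠ 0 := by
    intro h
    obtain ⟨h₁, h₂⟩ :=
      eq_of_mul_eq_mul_of_gcd_eq hp hpe hqe (by exact_mod_cast sub_eq_zero.1 h)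
    exact hpq (Prod.ext h₁ h₂)
  have hdvd : (e : ℤ) ^ 2 ∣ (p.1 : ℤ) * q.2 - q.1 * p.2 := by
    have hp₁ : (e : ℤ) ∣ p.1 := mod_cast hpe ▸ Nat.gcd_dvd_left _ _
    have hp₂ : (e : ℤ) ∣ p.2 := mod_cast hpe ▸ Nat.gcd_dvd_right _ _
    have hq₁ : (e : ℤ) ∣ q.1 := mod_cast hqe ▸ Nat.gcd_dvd_left _ _
    have hq₂ : (e : ℤ) ∣ q.2 := mod_cast hqe ▸ Nat.gcd_dvd_right _ _
    rw [sq]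
    exact dvd_sub (mul_dvd_mul hp₁ hq₂) (mul_dvd_mul hq₁ hp₂)
  exact_mod_cast Int.le_of_dvd (abs_pos.2 hne) ((dvd_abs _ _).2 hdvd)

theorem sq_div_sq_le_abs_ratio_sub_ratio (hp : p ∈ gcdBox A B e) (hq : q ∈ gcdBox A B e)
    (hpq : p ≠ q) : (e : ℝ) ^ 2 / B ^ 2 ≤ |ratio p - ratio q| := by
  obtain ⟨hpbox, hpe⟩ := mem_gcdBox.1 hp
  obtain ⟨hqbox, hqe⟩ := mem_gcdBox.1 hq
  obtain ⟨-, hp₀, -, hpB⟩ := mem_natBox.1 hpbox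
  obtain ⟨-, hq₀, -, hqB⟩ := mem_natBox.1 hqbox
  have hp₂ : (0 : ℝ) < p.2 := mod_cast hp₀
  have hq₂ : (0 : ℝ) < q.2 := mod_cast hq₀
  rw [ratio, ratio, div_sub_div _ _ hp₂.ne' hq₂.ne', abs_div, abs_of_pos (mul_pos hp₂ hq₂), sq B,
    mul_comm (p.2 : ℝ) (q.1 : ℝ)]
  have hB : 0 ≤ B := hp₂.le.trans hpB
  gcongr
  exact sq_le_abs_mul_sub_mul_of_gcd_eq hp₀ hpe hqe hpq

theorem card_le_of_subset_gcdBox {T : Finset (ℕ × ℕ)} (hB : 0 < B) (he : 0 < e) (hL : 0 ≤ L)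
    (hT : T ⊆ gcdBox A B e) (hclose : ∀ p ∈ T, ∀ q ∈ T, |ratio p - ratio q| ≤ L) :
    (#T : ℝ) ≤ 1 + L * B ^ 2 / (e : ℝ) ^ 2 := by
  rw [← div_div_eq_mul_div]
  exact card_le_one_add_div_of_separated (by positivity) hL
    (fun p hp q hq ↦ sq_div_sq_le_abs_ratio_sub_ratio (hT hp) (hT hq)) hclose

theorem card_le_of_subset_gcdBox_product_of_fst {U : Finset ((ℕ × ℕ) × (ℕ × ℕ))} (hA : 0 ≤ A)
    (hB : 0 ≤ B) (hM : 0 ≤ M) (hN : 0 < N) (he : 0 < e) (hf : 0 < f) (hη : 0 ≤ η)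
    (hU : U ⊆ gcdBox A B e ×ˢ gcdBox M N f)
    (hfst : ∀ a p q, (a, p) ∈ U → (a, q) ∈ U → |ratio p - ratio q| ≤ η * (M / N)) :
    (#U : ℝ) ≤ A * B / (e : ℝ) ^ 2 + η * (A * B / (e : ℝ) ^ 2) * (M * N / (f : ℝ) ^ 2) := by
  have hfiber : ∀ a ∈ gcdBox A B e,
      (#{x ∈ U | x.1 = a} : ℝ) ≤ 1 + η * (M / N) * N ^ 2 / (f : ℝ) ^ 2 := by
    intro a _
    have hinj : Set.InjOn Prod.snd (↑({x ∈ U | x.1 = a}) : Set ((ℕ × ℕ) × (ℕ × ℕ))) := by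
      intro x hx y hy hxy
      exact Prod.ext ((mem_filter.1 hx).2.trans (mem_filter.1 hy).2.symm) hxy
    have hmem : ∀ p ∈ ({x ∈ U | x.1 = a}).image Prod.snd, (a, p) ∈ U := by
      simp only [mem_image, mem_filter]
      rintro _ ⟨⟨_, p⟩, ⟨hx, rfl⟩, rfl⟩
      exact hx
    rw [← card_image_of_injOn hinj]
    exact card_le_of_subset_gcdBox hN hf (by positivity)
      (fun p hp ↦ (mem_product.1 (hU (hmem p hp))).2)
      fun p hp q hq ↦ hfst a p q (hmem p hp) (hmem q hq)
  calc (#U : ℝ) ≤ (1 + η * (M / N) * N ^ 2 / (f : ℝ) ^ 2) * #(gcdBox A B e) :=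
        card_le_mul_of_card_fiber_le (fun x hx ↦ (mem_product.1 (hU hx)).1) hfiber
    _ ≤ (1 + η * (M / N) * N ^ 2 / (f : ℝ) ^ 2) * (A * B / (e : ℝ) ^ 2) := by
        gcongr
        exact card_gcdBox_le hA hB he
    _ = A * B / (e : ℝ) ^ 2 + η * (A * B / (e : ℝ) ^ 2) * (M * N / (f : ℝ) ^ 2) := by
        field_simp

theorem card_le_of_subset_gcdBox_product {U : Finset ((ℕ × ℕ) × (ℕ × ℕ))} (hA : 0 ≤ A)
    (hB : 0 < B) (hM : 0 ≤ M) (hN : 0 < N) (he : 0 < e) (hf : 0 < f) (hη : 0 ≤ η)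
    (hU : U ⊆ gcdBox A B e ×ˢ gcdBox M N f)
    (hfst : ∀ a p q, (a, p) ∈ U → (a, q) ∈ U → |ratio p - ratio q| ≤ η * (M / N))
    (hsnd : ∀ p q b, (p, b) ∈ U → (q, b) ∈ U → |ratio p - ratio q| ≤ η * (A / B)) :
    (#U : ℝ) ≤ min (A * B / (e : ℝ) ^ 2) (M * N / (f : ℝ) ^ 2) +
      η * (A * B / (e : ℝ) ^ 2) * (M * N / (f : ℝ) ^ 2) := by
  have hcard_fst := card_le_of_subset_gcdBox_product_of_fst hA hB.le hM hN he hf hη hU hfst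
  have hswap : U.map (Equiv.prodComm _ _).toEmbedding ⊆ gcdBox M N f ×ˢ gcdBox A B e := by
    intro x hx
    obtain ⟨y, hy, rfl⟩ := mem_map.1 hx
    exact mem_product.2 (mem_product.1 (hU hy)).symm
  have hcard_snd := card_le_of_subset_gcdBox_product_of_fst hM hN.le hA hB hf he hη hswap
    fun b p q hp hq ↦ hsnd p q b (by simpa using hp) (by simpa using hq)
  rw [card_map, mul_right_comm] at hcard_snd
  rw [min_add]
  exact le_min hcard_fst hcard_snd

end Pairs

section Sums

open Finset

variable {P Q X Y η : ℝ}

theorem sum_Icc_inv_sq_le_two (n : ℕ) : ∑ i ∈ Icc 1 n, ((i : ℝ) ^ 2)⁻¹ ≤ 2 := by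
  have h := sum_Ioo_inv_sq_le (α := ℝ) 0 (n + 1)
  rw [Nat.cast_zero, zero_add, div_one] at h
  exact h

theorem sum_min_div_sq_le (hP : 0 < P) (hQ : 0 ≤ Q) (n : ℕ) :
    ∑ i ∈ Icc 1 n, min P (Q / (i : ℝ) ^ 2) ≤ 3 * √(P * Q) := by
  -- The two arguments of the minimum cross at `t`.
  set t := √(Q / P)
  have ht : 0 ≤ t := Real.sqrt_nonneg _
  have hQt : Q = P * t ^ 2 := by rw [Real.sq_sqrt (by positivity), mul_div_cancel₀ _ hP.ne']
  have hPt : √(P * Q) = P * t := by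
    rw [hQt, ← mul_assoc, ← sq, ← mul_pow, Real.sqrt_sq (by positivity)]
  set m := ⌊t⌋₊
  have hsplit : Icc 1 n ⊆ Icc 1 m ∪ Ioo m (n + 1) := by
    intro i
    simp only [mem_union, mem_Icc, mem_Ioo]
    omega
  have hdisj : Disjoint (Icc 1 m) (Ioo m (n + 1)) := by
    simp only [disjoint_left, mem_Icc, mem_Ioo]
    omega
  calc ∑ i ∈ Icc 1 n, min P (Q / (i : ℝ) ^ 2)
      ≤ ∑ i ∈ Icc 1 m ∪ Ioo m (n + 1), min P (Q / (i : ℝ) ^ 2) :=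
        sum_le_sum_of_subset_of_nonneg hsplit fun _ _ _ ↦ by positivity
    _ = ∑ i ∈ Icc 1 m, min P (Q / (i : ℝ) ^ 2) + ∑ i ∈ Ioo m (n + 1), min P (Q / (i : ℝ) ^ 2) :=
        sum_union hdisj
    _ ≤ ∑ _i ∈ Icc 1 m, P + ∑ i ∈ Ioo m (n + 1), Q * ((i : ℝ) ^ 2)⁻¹ := by
        gcongr
        · exact min_le_left _ _
        · exact min_le_right _ _
    _ ≤ m * P + Q * (2 / (m + 1)) := by
        rw [sum_const, Nat.card_Icc, Nat.add_sub_cancel, nsmul_eq_mul, ← mul_sum]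
        gcongr
        exact sum_Ioo_inv_sq_le m (n + 1)
    _ ≤ t * P + 2 * (P * t) := by
        refine add_le_add (by gcongr; exact Nat.floor_le ht) ?_
        have hmul : P * t * t ≤ P * t * (m + 1) := by
          gcongr
          exact (Nat.lt_floor_add_one t).le
        rw [mul_div_assoc', div_le_iff₀ (by positivity), hQt]
        linarith
    _ = 3 * √(P * Q) := by rw [hPt]; ring

theorem sum_sum_min_div_sq_le (hX : 1 ≤ X) (hY : 0 ≤ Y) (n : ℕ) :
    ∑ e ∈ Icc 1 ⌊√X⌋₊, ∑ f ∈ Icc 1 n, min (X / (e : ℝ) ^ 2) (Y / (f : ℝ) ^ 2) ≤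
      3 * √(X * Y) * (1 + Real.log √X) := by
  have hinner : ∀ e ∈ Icc 1 ⌊√X⌋₊, ∑ f ∈ Icc 1 n, min (X / (e : ℝ) ^ 2) (Y / (f : ℝ) ^ 2) ≤
      3 * √(X * Y) * (e : ℝ)⁻¹ := by
    intro e he
    have he₀ : (0 : ℝ) < e := mod_cast (mem_Icc.1 he).1
    have hsqrt : √(X / (e : ℝ) ^ 2 * Y) = √(X * Y) * (e : ℝ)⁻¹ := by
      rw [div_mul_eq_mul_div, Real.sqrt_div' _ (sq_nonneg _), Real.sqrt_sq he₀.le, div_eq_mul_inv]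
    rw [mul_assoc, ← hsqrt]
    exact sum_min_div_sq_le (by positivity) hY n
  have hharmonic : ∑ e ∈ Icc 1 ⌊√X⌋₊, (e : ℝ)⁻¹ ≤ 1 + Real.log √X := by
    have h := harmonic_floor_le_one_add_log √X (Real.one_le_sqrt.2 hX)
    rw [harmonic_eq_sum_Icc] at h
    push_cast at h
    exact h
  calc _ ≤ ∑ e ∈ Icc 1 ⌊√X⌋₊, 3 * √(X * Y) * (e : ℝ)⁻¹ := sum_le_sum hinner
    _ ≤ 3 * √(X * Y) * (1 + Real.log √X) := by
        rw [← mul_sum]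
        gcongr

theorem sum_sum_mul_div_sq_le (hX : 0 ≤ X) (hY : 0 ≤ Y) (hη : 0 ≤ η) (m n : ℕ) :
    ∑ e ∈ Icc 1 m, ∑ f ∈ Icc 1 n, η * (X / (e : ℝ) ^ 2) * (Y / (f : ℝ) ^ 2) ≤
      4 * η * (X * Y) := by
  calc _ = η * X * Y * ((∑ e ∈ Icc 1 m, ((e : ℝ) ^ 2)⁻¹) * ∑ f ∈ Icc 1 n, ((f : ℝ) ^ 2)⁻¹) := by
        simp_rw [sum_mul_sum, mul_sum]
        exact sum_congr rfl fun e _ ↦ sum_congr rfl fun f _ ↦ by ring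
    _ ≤ η * X * Y * (2 * 2) := by
        gcongr
        · exact sum_Icc_inv_sq_le_two m
        · exact sum_Icc_inv_sq_le_two n
    _ = 4 * η * (X * Y) := by ring

end Sums

open Finset in
theorem card_le_of_subset_natBox_product {A B M N η : ℝ} {S : Finset ((ℕ × ℕ) × (ℕ × ℕ))}
    (hA : 0 ≤ A) (hB : 0 < B) (hAB : 1 ≤ A * B) (hM : 0 ≤ M) (hN : 0 < N) (hη : 0 ≤ η)
    (hS : S ⊆ natBox A B ×ˢ natBox M N)
    (hfst : ∀ a p q, (a, p) ∈ S → (a, q) ∈ S → |ratio p - ratio q| ≤ η * (M / N))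
    (hsnd : ∀ p q b, (p, b) ∈ S → (q, b) ∈ S → |ratio p - ratio q| ≤ η * (A / B)) :
    (#S : ℝ) ≤ 3 * √(A * B * (M * N)) * (1 + Real.log √(A * B)) +
      4 * η * (A * B * (M * N)) := by
  set gcds : (ℕ × ℕ) × (ℕ × ℕ) → ℕ × ℕ := fun x ↦ (x.1.1.gcd x.1.2, x.2.1.gcd x.2.2)
  have hmaps : Set.MapsTo gcds S ↑(Icc 1 ⌊√(A * B)⌋₊ ×ˢ Icc 1 ⌊√(M * N)⌋₊) := fun x hx ↦
    mem_product.2 ((mem_product.1 (hS hx)).imp gcd_mem_Icc_of_mem_natBox gcd_mem_Icc_of_mem_natBox)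
  have hfiber : ∀ e ∈ Icc 1 ⌊√(A * B)⌋₊, ∀ f ∈ Icc 1 ⌊√(M * N)⌋₊,
      (#{x ∈ S | gcds x = (e, f)} : ℝ) ≤ min (A * B / (e : ℝ) ^ 2) (M * N / (f : ℝ) ^ 2) +
        η * (A * B / (e : ℝ) ^ 2) * (M * N / (f : ℝ) ^ 2) := by
    intro e he f hf
    refine card_le_of_subset_gcdBox_product hA hB hM hN (mem_Icc.1 he).1 (mem_Icc.1 hf).1 hη
      (fun x hx ↦ ?_)
      (fun a p q hp hq ↦ hfst a p q (mem_of_mem_filter _ hp) (mem_of_mem_filter _ hq))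
      (fun p q b hp hq ↦ hsnd p q b (mem_of_mem_filter _ hp) (mem_of_mem_filter _ hq))
    obtain ⟨hxS, hgcds⟩ := mem_filter.1 hx
    obtain ⟨hx₁, hx₂⟩ := mem_product.1 (hS hxS)
    exact mem_product.2 ⟨mem_gcdBox.2 ⟨hx₁, congrArg Prod.fst hgcds⟩,
      mem_gcdBox.2 ⟨hx₂, congrArg Prod.snd hgcds⟩⟩
  have hMN : 0 ≤ M * N := by positivity
  rw [card_eq_sum_card_fiberwise hmaps, sum_product, Nat.cast_sum]
  simp_rw [Nat.cast_sum]
  refine (sum_le_sum fun e he ↦ sum_le_sum fun f hf ↦ hfiber e he f hf).trans ?_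
  simp_rw [sum_add_distrib]
  exact add_le_add (sum_sum_min_div_sq_le hAB hMN _)
    (sum_sum_mul_div_sq_le (zero_le_one.trans hAB) hMN hη _ _)

section Approximation

variable {s t x y δ ζ ν ν' ρ σ : ℝ} {k : ℕ}

theorem abs_sq_sub_sq_le (hs : 0 < s) (ht : 0 < t) (hσ : 0 < σ) (hδσ : 2 * δ ≤ σ)
    (hst : σ ^ 2 ≤ s * t) (h : |s - t| ≤ δ) : |s ^ 2 - t ^ 2| ≤ 6 * (δ / σ) * t ^ 2 := by
  have hδ : 0 ≤ δ := (abs_nonneg _).trans h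
  have hst' : s ≤ t + δ := by linarith [le_of_abs_le h]
  have hσt : σ ≤ 2 * t := by
    by_contra! hlt
    have hmul : s * t ≤ σ * (σ / 2) := by
      gcongr <;> linarith
    nlinarith
  have hδt : δ ≤ 2 * (δ / σ) * t := by
    calc δ = δ / σ * σ := (div_mul_cancel₀ δ hσ.ne').symm
      _ ≤ δ / σ * (2 * t) := by gcongr
      _ = 2 * (δ / σ) * t := by ring
  calc |s ^ 2 - t ^ 2| = (s + t) * |s - t| := by
        rw [sq_sub_sq, abs_mul, abs_of_pos (add_pos hs ht)]
    _ ≤ (3 * t) * (2 * (δ / σ) * t) := by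
        gcongr
        · linarith
        · exact h.trans hδt
    _ = 6 * (δ / σ) * t ^ 2 := by ring

theorem abs_sub_le_mul_max_of_abs_sub_pow_le (hk : k ≠ 0) (hx : 0 < x) (hy : 0 < y)
    (hνx : |ν - x ^ k| ≤ ζ * x ^ k) (hνy : |ν - y ^ k| ≤ ζ * y ^ k) :
    |x - y| ≤ 2 * ζ * max x y := by
  wlog hxy : y ≤ x generalizing x y
  · rw [abs_sub_comm, max_comm]
    exact this hy hx hνy hνx (le_of_not_ge hxy)
  have hζ : 0 ≤ ζ := nonneg_of_mul_nonneg_left ((abs_nonneg _).trans hνx) (by positivity)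
  obtain ⟨j, rfl⟩ := Nat.exists_eq_add_one_of_ne_zero hk
  rw [max_eq_left hxy, abs_of_nonneg (sub_nonneg.2 hxy)]
  refine le_of_mul_le_mul_right ?_ (pow_pos hx j)
  have hyx : y * y ^ j ≤ y * x ^ j := by gcongr
  have hζyx : ζ * y ^ (j + 1) ≤ ζ * x ^ (j + 1) := by gcongr
  calc (x - y) * x ^ j ≤ x ^ (j + 1) - y ^ (j + 1) := by
        rw [pow_succ', pow_succ', sub_mul]
        linarith
    _ ≤ ζ * x ^ (j + 1) + ζ * y ^ (j + 1) := by
        linarith [neg_le_of_abs_le hνx, le_of_abs_le hνy]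
    _ ≤ 2 * (ζ * x ^ (j + 1)) := by linarith
    _ = 2 * ζ * x * x ^ j := by ring

theorem abs_sub_le_of_abs_sub_le_mul (hρ : 0 ≤ ρ) (hζ : 0 ≤ ζ) (hζ' : ζ ≤ 1 / 2)
    (hν : |ν - ρ| ≤ ζ * ρ) (hν' : |ν' - ρ| ≤ ζ * ρ) : |ν - ν'| ≤ 4 * ζ * ν := by
  have hρν : ρ ≤ 2 * ν := by
    have hζρ : ζ * ρ ≤ 1 / 2 * ρ := by gcongr
    linarith [(abs_le.1 hν).1]
  calc |ν - ν'| ≤ |ν - ρ| + |ρ - ν'| := abs_sub_le _ _ _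
    _ ≤ ζ * ρ + ζ * ρ := by
        rw [abs_sub_comm ρ]
        exact add_le_add hν hν'
    _ = 2 * ζ * ρ := by ring
    _ ≤ 2 * ζ * (2 * ν) := by gcongr
    _ = 4 * ζ * ν := by ring

end Approximation

section Spacing

open Finset

variable {k : ℕ} {D₁ D₂ N₁ N₂ P Q δ : ℝ}

/-- The quadruples `(d₁, d₂, n₁, n₂)` of positive integers counted by `A(D₁, D₂, N₁, N₂; δ)`. -/
def spacingSet (k : ℕ) (D₁ D₂ N₁ N₂ δ : ℝ) : Set (ℕ × ℕ × ℕ × ℕ) :=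
  {q | 0 < q.1 ∧ 0 < q.2.1 ∧ 0 < q.2.2.1 ∧ 0 < q.2.2.2 ∧
    D₁ < (q.1 : ℝ) ∧ (q.1 : ℝ) ≤ 2 * D₁ ∧
    D₂ < (q.2.1 : ℝ) ∧ (q.2.1 : ℝ) ≤ 2 * D₂ ∧
    N₁ < (q.2.2.1 : ℝ) ∧ (q.2.2.1 : ℝ) ≤ 2 * N₁ ∧
    N₂ < (q.2.2.2 : ℝ) ∧ (q.2.2.2 : ℝ) ≤ 2 * N₂ ∧
    |√((q.2.2.1 : ℝ) / (q.1 : ℝ) ^ k) - √((q.2.2.2 : ℝ) / (q.2.1 : ℝ) ^ k)| ≤ δ}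

open Classical in
/-- The quadruples in `spacingSet`, regrouped as `((n₁, n₂), (d₁, d₂))` so that the two pairs whose
ratios are compared become the two components. -/
def spacingPairs (k : ℕ) (D₁ D₂ N₁ N₂ δ : ℝ) : Finset ((ℕ × ℕ) × (ℕ × ℕ)) :=
  {x ∈ natBox (2 * N₁) (2 * N₂) ×ˢ natBox (2 * D₁) (2 * D₂) |
    (N₁ < x.1.1 ∧ N₂ < x.1.2 ∧ D₁ < x.2.1 ∧ D₂ < x.2.2) ∧
      |√((x.1.1 : ℝ) / (x.2.1 : ℝ) ^ k) - √((x.1.2 : ℝ) / (x.2.2 : ℝ) ^ k)| ≤ δ}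

theorem mem_spacingPairs {x : (ℕ × ℕ) × (ℕ × ℕ)} : x ∈ spacingPairs k D₁ D₂ N₁ N₂ δ ↔
    (x.1 ∈ natBox (2 * N₁) (2 * N₂) ∧ x.2 ∈ natBox (2 * D₁) (2 * D₂)) ∧
      (N₁ < x.1.1 ∧ N₂ < x.1.2 ∧ D₁ < x.2.1 ∧ D₂ < x.2.2) ∧
      |√((x.1.1 : ℝ) / (x.2.1 : ℝ) ^ k) - √((x.1.2 : ℝ) / (x.2.2 : ℝ) ^ k)| ≤ δ := by
  rw [spacingPairs, mem_filter, mem_product]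

/-- The natural scale for `δ`, where `P = D₁ * D₂` and `Q = N₁ * N₂`: the geometric mean of
`√(n₁ / d₁ ^ k)` and `√(n₂ / d₂ ^ k)` is at least this large. -/
def spacingScale (k : ℕ) (P Q : ℝ) : ℝ := √√(Q / (4 * P) ^ k)

theorem spacingScale_pos (hP : 0 < P) (hQ : 0 < Q) : 0 < spacingScale k P Q := by
  unfold spacingScale
  positivity

theorem div_spacingScale_mul (hP : 0 < P) (hQ : 0 < Q) :
    δ / spacingScale k P Q * (P * Q) =
      (4 : ℝ) ^ ((k : ℝ) / 4) * (δ * P ^ (1 + (k : ℝ) / 4) * Q ^ ((3 : ℝ) / 4)) := by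
  have hscale : spacingScale k P Q * (4 : ℝ) ^ ((k : ℝ) / 4) * P ^ ((k : ℝ) / 4) =
      Q ^ ((1 : ℝ) / 4) := by
    have hpow : ((4 * P) ^ k) ^ ((1 : ℝ) / 4) = (4 : ℝ) ^ ((k : ℝ) / 4) * P ^ ((k : ℝ) / 4) := by
      rw [← Real.rpow_natCast, ← Real.rpow_mul (by positivity), mul_one_div,
        Real.mul_rpow (by norm_num) hP.le]
    rw [spacingScale, Real.sqrt_eq_rpow, Real.sqrt_eq_rpow, ← Real.rpow_mul (by positivity),
      show (1 : ℝ) / 2 * (1 / 2) = 1 / 4 by norm_num, Real.div_rpow hQ.le (by positivity), hpow,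
      mul_assoc, div_mul_cancel₀ _ (by positivity)]
  have hQpow : Q = Q ^ ((1 : ℝ) / 4) * Q ^ ((3 : ℝ) / 4) := by
    rw [← Real.rpow_add hQ]
    norm_num
  rw [div_mul_eq_mul_div, div_eq_iff (spacingScale_pos hP hQ).ne', Real.rpow_add hP, Real.rpow_one]
  nth_rw 1 [hQpow]
  rw [← hscale]
  ring

theorem ncard_spacingSet_le : (spacingSet k D₁ D₂ N₁ N₂ δ).ncard ≤
    #(spacingPairs k D₁ D₂ N₁ N₂ δ) := by
  rw [← Set.ncard_coe_finset]
  refine Set.ncard_le_ncard_of_injOn (fun q ↦ ((q.2.2.1, q.2.2.2), (q.1, q.2.1))) ?_ ?_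
  · rintro ⟨d₁, d₂, n₁, n₂⟩
      ⟨hd₁, hd₂, hn₁, hn₂, hD₁, hD₁', hD₂, hD₂', hN₁, hN₁', hN₂, hN₂', h⟩
    exact mem_spacingPairs.2 ⟨⟨mem_natBox.2 ⟨hn₁, hn₂, hN₁', hN₂'⟩,
      mem_natBox.2 ⟨hd₁, hd₂, hD₁', hD₂'⟩⟩, ⟨hN₁, hN₂, hD₁, hD₂⟩, h⟩
  · rintro ⟨d₁, d₂, n₁, n₂⟩ - ⟨d₁', d₂', n₁', n₂'⟩ - h
    simp only [Prod.mk.injEq] at h ⊢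
    tauto

theorem ratio_le_of_mem_natBox {A B : ℝ} {p : ℕ × ℕ} (hB : 0 < B)
    (hp : p ∈ natBox (2 * A) (2 * B)) (hBp : B < p.2) : ratio p ≤ 2 * A / B := by
  obtain ⟨-, -, hA, -⟩ := mem_natBox.1 hp
  unfold ratio
  gcongr
  exact (Nat.cast_nonneg _).trans hA

theorem spacingScale_sq_le {d₁ d₂ n₁ n₂ : ℝ} (hN₁ : 0 ≤ N₁) (hN₂ : 0 ≤ N₂)
    (hd₁ : 0 < d₁) (hd₂ : 0 < d₂) (hdD₁ : d₁ ≤ 2 * D₁) (hdD₂ : d₂ ≤ 2 * D₂) (hNn₁ : N₁ ≤ n₁)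
    (hNn₂ : N₂ ≤ n₂) :
    spacingScale k (D₁ * D₂) (N₁ * N₂) ^ 2 ≤ √(n₁ / d₁ ^ k) * √(n₂ / d₂ ^ k) := by
  have hn₁ : 0 ≤ n₁ := hN₁.trans hNn₁
  have hn₂ : 0 ≤ n₂ := hN₂.trans hNn₂
  have hdD : d₁ * d₂ ≤ 4 * (D₁ * D₂) :=
    (mul_le_mul hdD₁ hdD₂ hd₂.le (hd₁.le.trans hdD₁)).trans_eq (by ring)
  rw [spacingScale, Real.sq_sqrt (Real.sqrt_nonneg _), ← Real.sqrt_mul (by positivity),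
    div_mul_div_comm, ← mul_pow]
  gcongr

theorem abs_ratio_sub_ratio_pow_le {p q : ℕ × ℕ} (hD₁ : 0 < D₁) (hD₂ : 0 < D₂)
    (hN₁ : 0 < N₁) (hN₂ : 0 < N₂) (hδ : 2 * δ ≤ spacingScale k (D₁ * D₂) (N₁ * N₂))
    (hpq : (p, q) ∈ spacingPairs k D₁ D₂ N₁ N₂ δ) :
    |ratio p - ratio q ^ k| ≤ 6 * (δ / spacingScale k (D₁ * D₂) (N₁ * N₂)) * ratio q ^ k := by
  obtain ⟨n₁, n₂⟩ := p
  obtain ⟨d₁, d₂⟩ := q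
  obtain ⟨hbox, ⟨hNn₁, hNn₂, hDd₁, hDd₂⟩, hclose⟩ := mem_spacingPairs.1 hpq
  obtain ⟨-, -, hdD₁, hdD₂⟩ := mem_natBox.1 hbox.2
  simp only at hNn₁ hNn₂ hDd₁ hDd₂ hdD₁ hdD₂ hclose
  have hn₁ := hN₁.trans hNn₁
  have hn₂ := hN₂.trans hNn₂
  have hd₁ := hD₁.trans hDd₁
  have hd₂ := hD₂.trans hDd₂
  have hsq := abs_sq_sub_sq_le (by positivity) (by positivity)
    (spacingScale_pos (by positivity) (by positivity)) hδ
    (spacingScale_sq_le hN₁.le hN₂.le hd₁ hd₂ hdD₁ hdD₂ hNn₁.le hNn₂.le) hclose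
  rw [Real.sq_sqrt (by positivity), Real.sq_sqrt (by positivity)] at hsq
  have hdiff : ratio (n₁, n₂) - ratio (d₁, d₂) ^ k =
      (n₁ / (d₁ : ℝ) ^ k - n₂ / (d₂ : ℝ) ^ k) * ((d₁ : ℝ) ^ k / n₂) := by
    simp only [ratio, div_pow]
    field_simp
  have hpow : ratio (d₁, d₂) ^ k = n₂ / (d₂ : ℝ) ^ k * ((d₁ : ℝ) ^ k / n₂) := by
    simp only [ratio, div_pow]
    field_simp
  rw [hdiff, hpow, abs_mul, abs_of_pos (show 0 < (d₁ : ℝ) ^ k / n₂ by positivity), ← mul_assoc]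
  gcongr

theorem abs_ratio_snd_sub_le {a p q : ℕ × ℕ} (hk : k ≠ 0) (hD₁ : 0 < D₁) (hD₂ : 0 < D₂)
    (hN₁ : 0 < N₁) (hN₂ : 0 < N₂) (hδ : 2 * δ ≤ spacingScale k (D₁ * D₂) (N₁ * N₂))
    (hp : (a, p) ∈ spacingPairs k D₁ D₂ N₁ N₂ δ) (hq : (a, q) ∈ spacingPairs k D₁ D₂ N₁ N₂ δ) :
    |ratio p - ratio q| ≤ 24 * (δ / spacingScale k (D₁ * D₂) (N₁ * N₂)) * (D₁ / D₂) := by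
  have hδ₀ : 0 ≤ δ := (abs_nonneg _).trans (mem_spacingPairs.1 hp).2.2
  have hσ := spacingScale_pos (k := k) (mul_pos hD₁ hD₂) (mul_pos hN₁ hN₂)
  have hratio : ∀ r, (a, r) ∈ spacingPairs k D₁ D₂ N₁ N₂ δ →
      0 < ratio r ∧ ratio r ≤ 2 * D₁ / D₂ := by
    intro r hr
    obtain ⟨hbox, ⟨-, -, hD₁r, hD₂r⟩, -⟩ := mem_spacingPairs.1 hr
    exact ⟨div_pos (hD₁.trans hD₁r) (hD₂.trans hD₂r),
      ratio_le_of_mem_natBox hD₂ hbox.2 hD₂r⟩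
  obtain ⟨hp₀, hp₁⟩ := hratio p hp
  obtain ⟨hq₀, hq₁⟩ := hratio q hq
  have hap := abs_ratio_sub_ratio_pow_le hD₁ hD₂ hN₁ hN₂ hδ hp
  have haq := abs_ratio_sub_ratio_pow_le hD₁ hD₂ hN₁ hN₂ hδ hq
  set ε := δ / spacingScale k (D₁ * D₂) (N₁ * N₂)
  calc |ratio p - ratio q| ≤ 2 * (6 * ε) * max (ratio p) (ratio q) :=
        abs_sub_le_mul_max_of_abs_sub_pow_le hk hp₀ hq₀ hap haq
    _ ≤ 2 * (6 * ε) * (2 * D₁ / D₂) := by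
        gcongr
        exact max_le hp₁ hq₁
    _ = 24 * ε * (D₁ / D₂) := by ring

theorem abs_ratio_fst_sub_le {p q b : ℕ × ℕ} (hD₁ : 0 < D₁) (hD₂ : 0 < D₂) (hN₁ : 0 < N₁)
    (hN₂ : 0 < N₂) (hδ : 12 * δ ≤ spacingScale k (D₁ * D₂) (N₁ * N₂))
    (hp : (p, b) ∈ spacingPairs k D₁ D₂ N₁ N₂ δ) (hq : (q, b) ∈ spacingPairs k D₁ D₂ N₁ N₂ δ) :
    |ratio p - ratio q| ≤ 48 * (δ / spacingScale k (D₁ * D₂) (N₁ * N₂)) * (N₁ / N₂) := by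
  have hδ₀ : 0 ≤ δ := (abs_nonneg _).trans (mem_spacingPairs.1 hp).2.2
  have hσ := spacingScale_pos (k := k) (mul_pos hD₁ hD₂) (mul_pos hN₁ hN₂)
  have hζ : 6 * (δ / spacingScale k (D₁ * D₂) (N₁ * N₂)) ≤ 1 / 2 := by
    rw [← mul_div_assoc, div_le_iff₀ hσ]
    linarith
  have hδ₂ : 2 * δ ≤ spacingScale k (D₁ * D₂) (N₁ * N₂) := by linarith
  have hρ : 0 ≤ ratio b ^ k := by unfold ratio; positivity
  obtain ⟨hbox, ⟨-, hN₂p, -⟩, -⟩ := mem_spacingPairs.1 hp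
  have hpb := abs_ratio_sub_ratio_pow_le hD₁ hD₂ hN₁ hN₂ hδ₂ hp
  have hqb := abs_ratio_sub_ratio_pow_le hD₁ hD₂ hN₁ hN₂ hδ₂ hq
  set ε := δ / spacingScale k (D₁ * D₂) (N₁ * N₂)
  calc |ratio p - ratio q| ≤ 4 * (6 * ε) * ratio p :=
        abs_sub_le_of_abs_sub_le_mul hρ (by positivity) hζ hpb hqb
    _ ≤ 4 * (6 * ε) * (2 * N₁ / N₂) := by
        gcongr
        exact ratio_le_of_mem_natBox hN₂ hbox.1 hN₂p
    _ = 48 * ε * (N₁ / N₂) := by ring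

theorem card_spacingPairs_le_of_le_scale (hk : k ≠ 0) (hD₁ : 0 < D₁) (hD₂ : 0 < D₂)
    (hN₁ : 0 < N₁) (hN₂ : 0 < N₂) (hN : 1 ≤ 4 * (N₁ * N₂)) (hδ : 0 ≤ δ)
    (hδ' : 12 * δ ≤ spacingScale k (D₁ * D₂) (N₁ * N₂)) :
    (#(spacingPairs k D₁ D₂ N₁ N₂ δ) : ℝ) ≤
      12 * √(D₁ * D₂ * (N₁ * N₂)) * (1 + Real.log √(4 * (N₁ * N₂))) +
        3072 * (δ / spacingScale k (D₁ * D₂) (N₁ * N₂) * (D₁ * D₂ * (N₁ * N₂))) := by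
  have hσ := spacingScale_pos (k := k) (mul_pos hD₁ hD₂) (mul_pos hN₁ hN₂)
  set η := 48 * (δ / spacingScale k (D₁ * D₂) (N₁ * N₂)) with hη
  have hη₀ : 0 ≤ η := by positivity
  have hfst : ∀ a p q, (a, p) ∈ spacingPairs k D₁ D₂ N₁ N₂ δ →
      (a, q) ∈ spacingPairs k D₁ D₂ N₁ N₂ δ →
      |ratio p - ratio q| ≤ η * ((2 * D₁) / (2 * D₂)) := by
    intro a p q hp hq
    rw [mul_div_mul_left _ _ two_ne_zero]
    refine (abs_ratio_snd_sub_le hk hD₁ hD₂ hN₁ hN₂ (by linarith) hp hq).trans ?_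
    rw [hη]
    gcongr
    norm_num
  have hsnd : ∀ p q b, (p, b) ∈ spacingPairs k D₁ D₂ N₁ N₂ δ →
      (q, b) ∈ spacingPairs k D₁ D₂ N₁ N₂ δ →
      |ratio p - ratio q| ≤ η * ((2 * N₁) / (2 * N₂)) := by
    intro p q b hp hq
    rw [mul_div_mul_left _ _ two_ne_zero]
    exact abs_ratio_fst_sub_le hD₁ hD₂ hN₁ hN₂ hδ' hp hq
  have hNN : 2 * N₁ * (2 * N₂) = 4 * (N₁ * N₂) := by ring
  have hcard := card_le_of_subset_natBox_product (by positivity) (by positivity) (hNN ▸ hN)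
    (by positivity) (by positivity) hη₀ (filter_subset _ _) hfst hsnd
  have hprod : 4 * (N₁ * N₂) * (2 * D₁ * (2 * D₂)) = 4 ^ 2 * (D₁ * D₂ * (N₁ * N₂)) := by ring
  rw [hNN, hprod, Real.sqrt_mul (by positivity), Real.sqrt_sq (by norm_num)] at hcard
  exact hcard.trans_eq (by rw [hη]; ring)

theorem card_spacingPairs_le_of_scale_lt (hD₁ : 0 < D₁) (hD₂ : 0 < D₂) (hN₁ : 0 < N₁)
    (hN₂ : 0 < N₂) (hδ : spacingScale k (D₁ * D₂) (N₁ * N₂) < 12 * δ) :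
    (#(spacingPairs k D₁ D₂ N₁ N₂ δ) : ℝ) ≤
      192 * (δ / spacingScale k (D₁ * D₂) (N₁ * N₂) * (D₁ * D₂ * (N₁ * N₂))) := by
  have hσ := spacingScale_pos (k := k) (mul_pos hD₁ hD₂) (mul_pos hN₁ hN₂)
  have hone : 1 ≤ 12 * (δ / spacingScale k (D₁ * D₂) (N₁ * N₂)) := by
    rw [← mul_div_assoc, le_div_iff₀ hσ]
    linarith
  calc (#(spacingPairs k D₁ D₂ N₁ N₂ δ) : ℝ)
      ≤ #(natBox (2 * N₁) (2 * N₂)) * #(natBox (2 * D₁) (2 * D₂)) := by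
        rw [← Nat.cast_mul, ← card_product]
        exact_mod_cast card_le_card (filter_subset _ _)
    _ ≤ (2 * N₁ * (2 * N₂)) * (2 * D₁ * (2 * D₂)) := by
        gcongr <;> exact card_natBox_le (by positivity) (by positivity)
    _ = 1 * (16 * (D₁ * D₂ * (N₁ * N₂))) := by ring
    _ ≤ 12 * (δ / _) * (16 * (D₁ * D₂ * (N₁ * N₂))) := by gcongr
    _ = 192 * (δ / _ * (D₁ * D₂ * (N₁ * N₂))) := by ring

theorem one_add_log_sqrt_le (hP : 1 ≤ P) (hQ : 1 ≤ Q) :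
    1 + Real.log √(4 * Q) ≤ 3 * Real.log (2 * (P * Q)) := by
  have hQ₀ : 0 < Q := by linarith
  have hQPQ : Q ≤ P * Q := le_mul_of_one_le_left hQ₀.le hP
  have hsqrt : √(4 * Q) ≤ 2 * (P * Q) := Real.sqrt_le_iff.2 ⟨by positivity, by nlinarith⟩
  have hlog_sqrt : Real.log √(4 * Q) ≤ Real.log (2 * (P * Q)) :=
    Real.log_le_log (by positivity) hsqrt
  have hlog_two : Real.log 2 ≤ Real.log (2 * (P * Q)) :=
    Real.log_le_log (by norm_num) (by linarith)
  linarith [Real.log_two_gt_d9]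

theorem card_spacingPairs_le (hk : k ≠ 0) (hD₁ : 1 ≤ D₁) (hD₂ : 1 ≤ D₂) (hN₁ : 1 ≤ N₁)
    (hN₂ : 1 ≤ N₂) (hδ : 0 ≤ δ) :
    (#(spacingPairs k D₁ D₂ N₁ N₂ δ) : ℝ) ≤
      3072 * (δ / spacingScale k (D₁ * D₂) (N₁ * N₂) * (D₁ * D₂ * (N₁ * N₂))) +
        36 * (√(D₁ * D₂ * (N₁ * N₂)) * Real.log (2 * (D₁ * D₂ * (N₁ * N₂)))) := by
  have hD : 1 ≤ D₁ * D₂ := one_le_mul_of_one_le_of_one_le hD₁ hD₂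
  have hN : 1 ≤ N₁ * N₂ := one_le_mul_of_one_le_of_one_le hN₁ hN₂
  have hσ := spacingScale_pos (k := k) (zero_lt_one.trans_le hD) (zero_lt_one.trans_le hN)
  have hlog := Real.log_nonneg (show 1 ≤ 2 * (D₁ * D₂ * (N₁ * N₂)) by nlinarith)
  rcases le_or_gt (12 * δ) (spacingScale k (D₁ * D₂) (N₁ * N₂)) with hsmall | hlarge
  · refine (card_spacingPairs_le_of_le_scale hk (by positivity) (by positivity) (by positivity)
      (by positivity) (by linarith) hδ hsmall).trans ?_
    rw [add_comm]
    refine add_le_add le_rfl ?_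
    calc 12 * √(D₁ * D₂ * (N₁ * N₂)) * (1 + Real.log √(4 * (N₁ * N₂)))
        ≤ 12 * √(D₁ * D₂ * (N₁ * N₂)) * (3 * Real.log (2 * (D₁ * D₂ * (N₁ * N₂)))) := by
          gcongr
          exact one_add_log_sqrt_le hD hN
      _ = 36 * (√(D₁ * D₂ * (N₁ * N₂)) * Real.log (2 * (D₁ * D₂ * (N₁ * N₂)))) := by ring
  · refine (card_spacingPairs_le_of_scale_lt (by positivity) (by positivity) (by positivity)
      (by positivity) hlarge).trans (le_add_of_le_of_nonneg ?_ (by positivity))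
    gcongr
    norm_num

end Spacing

theorem spacing_count_general (k : ℕ) (hk : k ≠ 0) :
    ∃ C : ℝ, ∀ D₁ D₂ N₁ N₂ : ℝ, 1 ≤ D₁ → 1 ≤ D₂ → 1 ≤ N₁ → 1 ≤ N₂ → ∀ δ : ℝ, 0 ≤ δ →
      ((spacingSet k D₁ D₂ N₁ N₂ δ).ncard : ℝ) ≤
        C * (δ * (D₁ * D₂) ^ (1 + (k : ℝ) / 4) * (N₁ * N₂) ^ ((3 : ℝ) / 4) +
          (D₁ * D₂ * N₁ * N₂) ^ ((1 : ℝ) / 2) * Real.log (2 * D₁ * D₂ * N₁ * N₂)) := by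
  refine ⟨3072 * 4 ^ ((k : ℝ) / 4) + 36, fun D₁ D₂ N₁ N₂ hD₁ hD₂ hN₁ hN₂ δ hδ ↦ ?_⟩
  have hD : 1 ≤ D₁ * D₂ := one_le_mul_of_one_le_of_one_le hD₁ hD₂
  have hN : 1 ≤ N₁ * N₂ := one_le_mul_of_one_le_of_one_le hN₁ hN₂
  have hlog := Real.log_nonneg (show 1 ≤ 2 * (D₁ * D₂ * (N₁ * N₂)) by nlinarith)
  have hcard : ((spacingSet k D₁ D₂ N₁ N₂ δ).ncard : ℝ) ≤ _ :=
    le_trans (mod_cast ncard_spacingSet_le) (card_spacingPairs_le hk hD₁ hD₂ hN₁ hN₂ hδ)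
  rw [div_spacingScale_mul (by positivity) (by positivity)] at hcard
  rw [mul_assoc (D₁ * D₂), mul_assoc 2, mul_assoc 2, mul_assoc 2, mul_assoc (D₁ * D₂),
    ← Real.sqrt_eq_rpow]
  set U := δ * (D₁ * D₂) ^ (1 + (k : ℝ) / 4) * (N₁ * N₂) ^ ((3 : ℝ) / 4)
  set V := √(D₁ * D₂ * (N₁ * N₂)) * Real.log (2 * (D₁ * D₂ * (N₁ * N₂)))
  have hU : 0 ≤ U := by positivity
  have hV : 0 ≤ (4 : ℝ) ^ ((k : ℝ) / 4) * V := by positivity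
  linarith

/-- Lemma 5.1: the number of quadruples `(d₁,d₂,n₁,n₂)` with `Dᵢ < dᵢ ≤ 2Dᵢ`, `Nᵢ < nᵢ ≤ 2Nᵢ`
and `|√(n₁/d₁^k) - √(n₂/d₂^k)| ≤ δ` is
`≪ δ (D₁D₂)^{1+k/4} (N₁N₂)^{3/4} + (D₁D₂N₁N₂)^{1/2} log(2D₁D₂N₁N₂)`. -/
theorem spacing_count (k : ℕ) (hk : 2 ≤ k) :
    ∃ C : ℝ, ∀ D₁ D₂ N₁ N₂ : ℝ, 1 ≤ D₁ → 1 ≤ D₂ → 1 ≤ N₁ → 1 ≤ N₂ →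
      ∀ δ : ℝ, 0 < δ →
      (Set.ncard {q : ℕ × ℕ × ℕ × ℕ |
          0 < q.1 ∧ 0 < q.2.1 ∧ 0 < q.2.2.1 ∧ 0 < q.2.2.2 ∧
          D₁ < (q.1 : ℝ) ∧ (q.1 : ℝ) ≤ 2 * D₁ ∧
          D₂ < (q.2.1 : ℝ) ∧ (q.2.1 : ℝ) ≤ 2 * D₂ ∧
          N₁ < (q.2.2.1 : ℝ) ∧ (q.2.2.1 : ℝ) ≤ 2 * N₁ ∧
          N₂ < (q.2.2.2 : ℝ) ∧ (q.2.2.2 : ℝ) ≤ 2 * N₂ ∧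
          |Real.sqrt ((q.2.2.1 : ℝ) / (q.1 : ℝ) ^ k) -
            Real.sqrt ((q.2.2.2 : ℝ) / (q.2.1 : ℝ) ^ k)| ≤ δ} : ℝ)
        ≤ C * (δ * (D₁ * D₂) ^ (1 + (k : ℝ) / 4) * (N₁ * N₂) ^ ((3 : ℝ) / 4) +
            (D₁ * D₂ * N₁ * N₂) ^ ((1 : ℝ) / 2) * Real.log (2 * D₁ * D₂ * N₁ * N₂)) := by
  obtain ⟨C, hC⟩ := spacing_count_general k (by omega)
  exact ⟨C, fun D₁ D₂ N₁ N₂ hD₁ hD₂ hN₁ hN₂ δ hδ ↦ hC D₁ D₂ N₁ N₂ hD₁ hD₂ hN₁ hN₂ δ hδ.le⟩
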